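/- arXiv:2410.14227 — 2 statements merged into one kernel-verified Lean document; each statement's English description precedes it below -/
import Mathlib

section
/- Let W be a Morse sequence on K. (1) If z is a p-cycle of K, then ∧̃_p(∧_p(z)) is homologous to z. (2) If z is a p-cocycle of K, then ∨̃_p(∨_p(z)) is cohomologous to z. -/
/-! ## Basic notions: simplicial complexes, collapses, expansions, fillings -/

variable {V : Type*} [DecidableEq V]

/-- A (finite) simplicial complex: a finite collection of nonempty finite sets that is
closed under taking nonempty subsets. -/
def IsComplex (K : Finset (Finset V)) : Prop :=
  ∀ τ ∈ K, τ.Nonempty ∧ ∀ σ, σ ⊆ τ → σ.Nonempty → σ ∈ K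

/-- `ν` is a facet (inclusion-maximal face) of `K`. -/
def IsFacet (K : Finset (Finset V)) (ν : Finset V) : Prop :=
  ν ∈ K ∧ ∀ ρ ∈ K, ν ⊆ ρ → ρ = ν

/-- `(σ, τ)` is a free pair for `K`: `σ ⊊ τ` and `τ` is the only face of `K`
strictly containing `σ`. -/
def IsFreePair (K : Finset (Finset V)) (σ τ : Finset V) : Prop :=
  σ ∈ K ∧ τ ∈ K ∧ σ ⊂ τ ∧ ∀ ρ ∈ K, σ ⊂ ρ → ρ = τ

/-- `K` is an elementary expansion of `L` (equivalently, `L` is an elementary collapse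
of `K`): `L = K \ {σ, τ}` for some free pair `(σ, τ)` of `K`. -/
def ElemExpansion (L K : Finset (Finset V)) : Prop :=
  ∃ σ τ, IsFreePair K σ τ ∧ L = K \ {σ, τ}

/-- `K` is an elementary filling of `L` (equivalently, `L` is an elementary perforation
of `K`): `L = K \ {ν}` for some facet `ν` of `K`. -/
def ElemFilling (L K : Finset (Finset V)) : Prop :=
  ∃ ν, IsFacet K ν ∧ L = K \ {ν}

/-- `L` is an elementary collapse of `K`. -/
def ElemCollapse (K L : Finset (Finset V)) : Prop :=
  ∃ σ τ, IsFreePair K σ τ ∧ L = K \ {σ, τ}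

/-- `K` collapses onto `L`: there is a sequence of elementary collapses from `K` to `L`. -/
def CollapsesOnto (K L : Finset (Finset V)) : Prop :=
  Relation.ReflTransGen ElemCollapse K L

/-! ## Morse sequences -/

/-- A Morse sequence `⟨∅ = K₀, …, K_k = K⟩`: each `K_i` is a simplicial complex that is
an elementary expansion or an elementary filling of `K_{i-1}`. -/
structure MorseSeq (V : Type*) [DecidableEq V] where
  k : ℕ
  seq : ℕ → Finset (Finset V)
  cpx : ∀ i ≤ k, IsComplex (seq i)
  init : seq 0 = ∅
  step : ∀ i, 1 ≤ i → i ≤ k → ElemExpansion (seq (i - 1)) (seq i) ∨ ElemFilling (seq (i - 1)) (seq i)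

/-- The simplicial complex `K = K_k` on which the Morse sequence lives. -/
def MorseSeq.cplx (W : MorseSeq V) : Finset (Finset V) := W.seq W.k

/-- A face added by a filling step: a critical face of `W`. -/
def MorseSeq.Critical (W : MorseSeq V) (ν : Finset V) : Prop :=
  ∃ i, 1 ≤ i ∧ i ≤ W.k ∧ W.seq i \ W.seq (i - 1) = {ν}

/-- `(σ, τ)` is a regular pair for `W`: the two faces are added together by an
elementary expansion step. -/
def MorseSeq.Regular (W : MorseSeq V) (σ τ : Finset V) : Prop :=
  ∃ i, 1 ≤ i ∧ i ≤ W.k ∧ σ ⊂ τ ∧ W.seq i \ W.seq (i - 1) = {σ, τ}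

/-- `σ` is lower regular for `W`. -/
def MorseSeq.LowerRegular (W : MorseSeq V) (σ : Finset V) : Prop := ∃ τ, W.Regular σ τ

/-- `τ` is upper regular for `W`. -/
def MorseSeq.UpperRegular (W : MorseSeq V) (τ : Finset V) : Prop := ∃ σ, W.Regular σ τ

/-! ## Chains modulo 2 -/

/-- The boundary `∂(σ)` of a simplex: the chain of its (nonempty) codimension-one faces. -/
def bd (σ : Finset V) : Finset (Finset V) :=
  σ.powerset.filter fun ρ => ρ.Nonempty ∧ ρ.card + 1 = σ.card

/-- The coboundary `δ(σ)` of a simplex in `K`: the chain of faces of `K` of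
codimension one over `σ` containing `σ`. -/
def cobd (K : Finset (Finset V)) (σ : Finset V) : Finset (Finset V) :=
  K.filter fun τ => σ ⊆ τ ∧ σ.card + 1 = τ.card

/-- Mod-2 linear extension: `chainSum c f` is the sum (symmetric difference) of
the chains `f σ` over `σ ∈ c`; an element belongs to it iff it belongs to an odd
number of the `f σ`. -/
def chainSum (c : Finset (Finset V)) (f : Finset V → Finset (Finset V)) : Finset (Finset V) :=
  (c.biUnion f).filter fun ν => (c.filter fun σ => ν ∈ f σ).card % 2 = 1

/-- `c` is a `p`-chain of `K`: a set of `p`-simplices of `K`. -/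
def IsChainOf (K : Finset (Finset V)) (p : ℕ) (c : Finset (Finset V)) : Prop :=
  ∀ ν ∈ c, ν ∈ K ∧ ν.card = p + 1

/-- `c` is a chain of critical `p`-simplices of `W` (an element of `Ŵ[p]`). -/
def IsCritChain (W : MorseSeq V) (p : ℕ) (c : Finset (Finset V)) : Prop :=
  ∀ ν ∈ c, W.Critical ν ∧ ν.card = p + 1

/-! ## Frames, reference and coreference maps -/

/-- A frame on `W`: it assigns to each `p`-simplex of `K` a chain of critical
`p`-simplices of `W`. -/
def IsFrame (W : MorseSeq V) (Υ : Finset V → Finset (Finset V)) : Prop :=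
  ∀ ν ∈ W.cplx, ∀ μ ∈ Υ ν, W.Critical μ ∧ μ.card = ν.card

/-- `Λ` is the reference map of `W`: a frame with `Λ(ν) = ν` for critical `ν`, and
`Λ(τ) = 0`, `Λ(∂τ) = 0` for upper regular `τ`. -/
def IsRefMap (W : MorseSeq V) (Λ : Finset V → Finset (Finset V)) : Prop :=
  IsFrame W Λ ∧ (∀ ν, W.Critical ν → Λ ν = {ν}) ∧
    ∀ τ, W.UpperRegular τ → Λ τ = ∅ ∧ chainSum (bd τ) Λ = ∅

/-- `Λ` is the coreference map of `W`: a frame with `Λ(ν) = ν` for critical `ν`, and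
`Λ(σ) = 0`, `Λ(δσ) = 0` for lower regular `σ`. -/
def IsCorefMap (W : MorseSeq V) (Λ : Finset V → Finset (Finset V)) : Prop :=
  IsFrame W Λ ∧ (∀ ν, W.Critical ν → Λ ν = {ν}) ∧
    ∀ σ, W.LowerRegular σ → Λ σ = ∅ ∧ chainSum (cobd W.cplx σ) Λ = ∅

/-- The extension map `∧̃` of `W` (defined from the coreference map `Vee`):
`∧̃(κ) = {ν ∈ K | κ ∈ ∨(ν)}`. -/
def extMap (W : MorseSeq V) (Vee : Finset V → Finset (Finset V)) (κ : Finset V) :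
    Finset (Finset V) :=
  W.cplx.filter fun ν => κ ∈ Vee ν

/-- The coextension map `∨̃` of `W` (defined from the reference map `Λ`):
`∨̃(κ) = {ν ∈ K | κ ∈ ∧(ν)}`. -/
def coextMap (W : MorseSeq V) (Λ : Finset V → Finset (Finset V)) (κ : Finset V) :
    Finset (Finset V) :=
  W.cplx.filter fun ν => κ ∈ Λ ν

/-! ## Homologous cycles, cohomologous cocycles (mod 2) -/

/-- Two `p`-chains of `K` are homologous: their sum is the boundary of a `(p+1)`-chain
of `K`. -/
def Homologous (K : Finset (Finset V)) (p : ℕ) (z z' : Finset (Finset V)) : Prop :=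
  ∃ c, IsChainOf K (p + 1) c ∧ chainSum c bd = symmDiff z z'

/-- Two `p`-chains of `K` are cohomologous: their sum is the coboundary of a
`(p-1)`-chain of `K`. -/
def Cohomologous (K : Finset (Finset V)) (p : ℕ) (z z' : Finset (Finset V)) : Prop :=
  ∃ c, IsChainOf K (p - 1) c ∧ chainSum c (cobd K) = symmDiff z z'

/-- Abstract (symmetric) form of the result, over `ZMod 2`. -/
theorem abstract_morse {α : Type*} [DecidableEq α] (K : Finset α) (B : α → α → ZMod 2)
    (R : α → α → Prop) (Crit P : α → Prop) (rk : α → ℕ) (N : ℕ)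
    (hN : ∀ a ∈ K, rk a < N)
    (htri : ∀ a ∈ K, Crit a ∨ (∃ b, R a b) ∨ (∃ b, R b a))
    (hRK : ∀ a b, R a b → a ∈ K ∧ b ∈ K ∧ B a b = 1)
    (hinj : ∀ a b a' b', R a b → R a' b' → rk a = rk a' → a = a')
    (hlow : ∀ a b, R a b → ∀ r ∈ K, B r b ≠ 0 → r ≠ a → rk r < rk a)
    (hup : ∀ a b, R a b → ∀ r ∈ K, B a r ≠ 0 → r ≠ b → rk b < rk r)
    (hP : ∀ a b, R a b → P a → ∀ r ∈ K, B r b ≠ 0 → P r)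
    (hBB : ∀ a ∈ K, ∀ b ∈ K, ∑ x ∈ K, B a x * B x b = 0)
    (L M : α → α → ZMod 2)
    (hLf : ∀ a ∈ K, ∀ k, ¬ Crit k → L a k = 0) (hMf : ∀ a ∈ K, ∀ k, ¬ Crit k → M a k = 0)
    (hLc : ∀ a k, Crit a → L a k = if a = k then 1 else 0)
    (hMc : ∀ a k, Crit a → M a k = if a = k then 1 else 0)
    (hLr : ∀ a b, R a b → ∀ k, L b k = 0 ∧ ∑ r ∈ K, B r b * L r k = 0)
    (hMr : ∀ a b, R a b → ∀ k, M a k = 0 ∧ ∑ r ∈ K, B a r * M r k = 0)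
    (z : α → ZMod 2) (hzP : ∀ a ∈ K, z a ≠ 0 → P a)
    (hz : ∀ a ∈ K, ∑ b ∈ K, B a b * z b = 0) :
    ∃ c : α → ZMod 2, (∀ b, c b ≠ 0 → ∃ a, R a b ∧ P a) ∧
      ∀ a ∈ K, ∑ b ∈ K, B a b * c b = ∑ k ∈ K, (∑ v ∈ K, z v * L v k) * M a k + z a := by
  have h01 : ∀ x : ZMod 2, x = 0 ∨ x = 1 := by decide
  have hxx : ∀ x : ZMod 2, x + x = 0 := by decide
  -- elimination of lower regular simplices
  have A : ∀ n, ∃ c : α → ZMod 2, (∀ b, c b ≠ 0 → ∃ a, R a b ∧ P a) ∧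
      ∀ a b, R a b → N ≤ rk a + n → z a + ∑ b ∈ K, B a b * c b = 0 := by
    intro n
    induction n with
    | zero =>
      refine ⟨0, by simp, fun a b h h' => ?_⟩
      have := hN a (hRK a b h).1
      omega
    | succ n ih =>
      obtain ⟨c, hc, hc0⟩ := ih
      by_cases hex : ∃ a b, R a b ∧ N = rk a + (n + 1) ∧ z a + ∑ b ∈ K, B a b * c b ≠ 0
      · obtain ⟨a, b, hab, hNa, hne⟩ := hex
        have hPgen : ∀ r ∈ K, z r + ∑ b ∈ K, B r b * c b ≠ 0 → P r := by
          intro r hr h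
          by_cases hzr : z r = 0
          · rw [hzr, zero_add] at h
            obtain ⟨x, hx, hx'⟩ := Finset.exists_ne_zero_of_sum_ne_zero h
            obtain ⟨y, hy, hPy⟩ := hc x (right_ne_zero_of_mul hx')
            exact hP y x hy hPy r hr (left_ne_zero_of_mul hx')
          · exact hzP r hr hzr
        refine ⟨fun x => c x + if x = b then 1 else 0, ?_, ?_⟩
        · intro x hx
          by_cases hxb : x = b
          · subst hxb
            exact ⟨a, hab, hPgen a (hRK _ _ hab).1 hne⟩
          · simp only [hxb, if_false, add_zero] at hx
            exact hc x hx
        · intro a' b' hab' hN'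
          have hbK := (hRK _ _ hab).2.1
          have e : z a' + ∑ x ∈ K, B a' x * (c x + if x = b then 1 else 0)
              = (z a' + ∑ x ∈ K, B a' x * c x) + B a' b := by
            simp [mul_add, Finset.sum_add_distrib, hbK, add_assoc]
          rw [e]
          by_cases haa : a' = a
          · subst haa
            rw [(hRK _ _ hab).2.2, (h01 _).resolve_left hne]; decide
          · have h1 : rk a' ≠ rk a := fun h => haa (hinj _ _ _ _ hab' hab h)
            rw [hc0 a' b' hab' (by omega), zero_add]
            by_contra hB
            have := hlow a b hab a' (hRK _ _ hab').1 hB haa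
            omega
      · refine ⟨c, hc, fun a b hab h => ?_⟩
        by_cases h2 : N ≤ rk a + n
        · exact hc0 a b hab h2
        · by_contra h3
          exact hex ⟨a, b, hab, by omega, h3⟩
  obtain ⟨c, hc, hc0⟩ := A N
  refine ⟨c, hc, ?_⟩
  set y : α → ZMod 2 := fun a => z a + ∑ b ∈ K, B a b * c b with hy
  have hylow : ∀ a b, R a b → y a = 0 := fun a b h => hc0 a b h (by omega)
  have hycyc : ∀ a ∈ K, ∑ b ∈ K, B a b * y b = 0 := by
    intro a ha
    simp only [hy, mul_add, Finset.sum_add_distrib, hz a ha, zero_add, Finset.mul_sum]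
    rw [Finset.sum_comm]
    refine Finset.sum_eq_zero fun x hx => ?_
    have := hBB a ha x hx
    simp only [← mul_assoc]
    rw [← Finset.sum_mul, this, zero_mul]
  have hyL : ∀ k, ∑ v ∈ K, y v * L v k = ∑ v ∈ K, z v * L v k := by
    intro k
    simp only [hy, add_mul, Finset.sum_add_distrib, Finset.sum_mul]
    rw [Finset.sum_comm]
    rw [add_eq_left]
    refine Finset.sum_eq_zero fun x hx => ?_
    by_cases hcx : c x = 0
    · simp [hcx]
    · obtain ⟨a, hab, _⟩ := hc x hcx
      have := (hLr a x hab k).2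
      calc ∑ i ∈ K, B i x * c x * L i k = c x * ∑ i ∈ K, B i x * L i k := by
            rw [Finset.mul_sum]; exact Finset.sum_congr rfl fun _ _ => by ring
        _ = 0 := by rw [this, mul_zero]
  have hycrit : ∀ k ∈ K, Crit k → ∑ v ∈ K, y v * L v k = y k := by
    intro k hk hkc
    rw [Finset.sum_eq_single_of_mem k hk, hLc k k hkc]
    · simp
    · intro v hv hvk
      rcases htri v hv with h | ⟨b, h⟩ | ⟨b, h⟩
      · simp [hLc v k h, hvk]
      · simp [hylow v b h]
      · simp [(hLr b v h k).1]
  have hB : ∀ n, ∀ v ∈ K, N ≤ rk v + n → ∑ k ∈ K, y k * M v k = y v := by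
    intro n
    induction n with
    | zero => intro v hv h; have := hN v hv; omega
    | succ n ih =>
      intro v hv hvn
      rcases htri v hv with h | ⟨b, h⟩ | ⟨a, h⟩
      · simp [hMc v _ h, hv]
      · simp [hylow v b h, (hMr v b h _).1]
      · have haK := (hRK _ _ h).1
        have e1 := hycyc a haK
        rw [← Finset.add_sum_erase K _ hv, (hRK _ _ h).2.2, one_mul] at e1
        have e2 : ∀ k, M v k = ∑ r ∈ K.erase v, B a r * M r k := by
          intro k
          have e2 := (hMr a v h k).2
          rw [← Finset.add_sum_erase K _ hv, (hRK _ _ h).2.2, one_mul] at e2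
          have := hxx (∑ r ∈ K.erase v, B a r * M r k)
          exact add_right_cancel (e2.trans this.symm)
        have e3 : y v = ∑ r ∈ K.erase v, B a r * y r :=
          add_right_cancel (e1.trans (hxx _).symm)
        rw [e3]
        simp only [e2, Finset.mul_sum]
        rw [Finset.sum_comm]
        refine Finset.sum_congr rfl fun r hr => ?_
        obtain ⟨hrv, hrK⟩ := Finset.mem_erase.1 hr
        by_cases hBr : B a r = 0
        · simp [hBr]
        · have := hup a v h r hrK hBr hrv
          rw [← ih r hrK (by omega), Finset.mul_sum]
          exact Finset.sum_congr rfl fun _ _ => by ring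
  intro a ha
  have key : ∑ k ∈ K, (∑ v ∈ K, z v * L v k) * M a k = y a := by
    rw [← hB N a ha (by omega)]
    refine Finset.sum_congr rfl fun k hk => ?_
    by_cases hkc : Crit k
    · rw [← hyL, hycrit k hk hkc]
    · simp [hMf a ha k hkc]
  rw [key]
  have := hxx (z a)
  simp only [hy]
  linear_combination -this

/-- Indicator of a chain. -/
def chInd (s : Finset (Finset V)) (a : Finset V) : ZMod 2 := if a ∈ s then 1 else 0

theorem chInd_ext {s t : Finset (Finset V)} (h : ∀ a, chInd s a = chInd t a) : s = t := by
  ext a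
  have := h a
  unfold chInd at this
  by_cases h1 : a ∈ s <;> by_cases h2 : a ∈ t <;> simp_all

theorem chInd_symmDiff (s t : Finset (Finset V)) (a : Finset V) :
    chInd (symmDiff s t) a = chInd s a + chInd t a := by
  unfold chInd
  by_cases h1 : a ∈ s <;> by_cases h2 : a ∈ t <;> simp [Finset.mem_symmDiff, h1, h2]
  decide

theorem chInd_chainSum (c : Finset (Finset V)) (f : Finset V → Finset (Finset V)) (a : Finset V) :
    chInd (chainSum c f) a = ∑ x ∈ c, chInd (f x) a := by
  have h1 : ∑ x ∈ c, chInd (f x) a = ((c.filter fun x => a ∈ f x).card : ZMod 2) := by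
    simp [chInd]
  rw [h1]
  have h2 : a ∈ chainSum c f ↔ (c.filter fun x => a ∈ f x).card % 2 = 1 := by
    unfold chainSum
    rw [Finset.mem_filter]
    refine ⟨fun h => h.2, fun h => ⟨?_, h⟩⟩
    have : (c.filter fun x => a ∈ f x).Nonempty := by
      rw [← Finset.card_pos]; omega
    obtain ⟨x, hx⟩ := this
    rw [Finset.mem_filter] at hx
    exact Finset.mem_biUnion.2 ⟨x, hx.1, hx.2⟩
  unfold chInd
  by_cases h : a ∈ chainSum c f
  · rw [if_pos h]
    have := h2.1 h
    symm
    rw [ZMod.natCast_eq_one_iff_odd, Nat.odd_iff]; exact this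
  · rw [if_neg h]
    have : (c.filter fun x => a ∈ f x).card % 2 ≠ 1 := fun h' => h (h2.2 h')
    symm
    rw [ZMod.natCast_eq_zero_iff_even, Nat.even_iff]; omega

theorem chInd_chainSum' {K c : Finset (Finset V)} (hc : c ⊆ K)
    (f : Finset V → Finset (Finset V)) (a : Finset V) :
    chInd (chainSum c f) a = ∑ x ∈ K, chInd c x * chInd (f x) a := by
  rw [chInd_chainSum, ← Finset.sum_subset hc]
  · refine Finset.sum_congr rfl fun x hx => by simp [chInd, hx]
  · intro x _ hx
    simp [chInd, hx]

/-- Incidence number. -/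
def inc (a b : Finset V) : ZMod 2 := if a ⊆ b ∧ a.card + 1 = b.card then 1 else 0

theorem inc_ne {a b : Finset V} (h : inc a b ≠ 0) : a ⊆ b ∧ a.card + 1 = b.card := by
  by_contra h'
  exact h (by simp only [inc, if_neg h'])

theorem inc_inc {K : Finset (Finset V)} (hK : IsComplex K) (a b : Finset V) (ha : a ∈ K)
    (hb : b ∈ K) : ∑ x ∈ K, inc a x * inc x b = 0 := by
  by_cases h : a ⊆ b ∧ a.card + 2 = b.card
  · obtain ⟨hab, hcard⟩ := h
    have hd : (b \ a).card = 2 := by rw [Finset.card_sdiff_of_subset hab]; omega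
    obtain ⟨u, v, huv, hd⟩ := Finset.card_eq_two.1 hd
    have hu : u ∈ b ∧ u ∉ a := by rw [← Finset.mem_sdiff, hd]; simp
    have hv : v ∈ b ∧ v ∉ a := by rw [← Finset.mem_sdiff, hd]; simp
    have key : K.filter (fun x => (a ⊆ x ∧ a.card + 1 = x.card) ∧ (x ⊆ b ∧ x.card + 1 = b.card))
        = {insert u a, insert v a} := by
      ext x
      simp only [Finset.mem_filter, Finset.mem_insert, Finset.mem_singleton]
      constructor
      · rintro ⟨hx, ⟨h1, h2⟩, h3, h4⟩
        have : (x \ a).card = 1 := by rw [Finset.card_sdiff_of_subset h1]; omega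
        obtain ⟨w, hw⟩ := Finset.card_eq_one.1 this
        have hxw : x = insert w a := by
          rw [← Finset.sdiff_union_of_subset h1, hw]; rfl
        have hwx : w ∈ x \ a := by rw [hw]; simp
        have : w ∈ b \ a := Finset.mem_sdiff.2
          ⟨h3 (Finset.mem_sdiff.1 hwx).1, (Finset.mem_sdiff.1 hwx).2⟩
        rw [hd] at this
        simp only [Finset.mem_insert, Finset.mem_singleton] at this
        rcases this with rfl | rfl
        · exact Or.inl hxw
        · exact Or.inr hxw
      · have aux : ∀ w, w ∈ b → w ∉ a → insert w a ∈ K ∧ (a ⊆ insert w a ∧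
            a.card + 1 = (insert w a).card) ∧ insert w a ⊆ b ∧ (insert w a).card + 1 = b.card := by
          intro w hw hwa
          have hs : insert w a ⊆ b := Finset.insert_subset hw hab
          have hcw := Finset.card_insert_of_notMem hwa
          exact ⟨(hK b hb).2 _ hs (Finset.insert_nonempty _ _),
            ⟨Finset.subset_insert _ _, hcw.symm⟩, hs, by omega⟩
        rintro (rfl | rfl)
        · exact aux u hu.1 hu.2
        · exact aux v hv.1 hv.2
    have e : ∀ x, inc a x * inc x b = if ((a ⊆ x ∧ a.card + 1 = x.card) ∧
        (x ⊆ b ∧ x.card + 1 = b.card)) then 1 else 0 := by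
      intro x
      unfold inc
      split_ifs <;> first | tauto | simp
    simp only [e]
    rw [Finset.sum_boole, key, Finset.card_pair]
    · decide
    · intro h
      have : u ∈ insert v a := by rw [← h]; simp
      simp [huv, hu.2] at this
  · refine Finset.sum_eq_zero fun x _ => ?_
    by_contra hne
    obtain ⟨h1, h2⟩ := inc_ne (left_ne_zero_of_mul hne)
    obtain ⟨h3, h4⟩ := inc_ne (right_ne_zero_of_mul hne)
    exact h ⟨h1.trans h3, by omega⟩

theorem chInd_bd {a b : Finset V} (ha : a.Nonempty) : chInd (bd b) a = inc a b := by
  unfold chInd inc bd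
  simp [ha]

theorem chInd_cobd {K : Finset (Finset V)} {a b : Finset V} (hb : b ∈ K) :
    chInd (cobd K a) b = inc a b := by
  unfold chInd inc cobd
  simp [hb]

theorem MorseSeq.step_sub (W : MorseSeq V) {i : ℕ} (h1 : 1 ≤ i) (hi : i ≤ W.k) :
    W.seq (i - 1) ⊆ W.seq i := by
  rcases W.step i h1 hi with ⟨σ, τ, _, h⟩ | ⟨ν, _, h⟩ <;> rw [h] <;> exact Finset.sdiff_subset

theorem MorseSeq.mono (W : MorseSeq V) {i j : ℕ} (hij : i ≤ j) (hj : j ≤ W.k) :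
    W.seq i ⊆ W.seq j := by
  induction j, hij using Nat.le_induction with
  | base => exact fun _ h => h
  | succ n hn ih => exact (ih (by omega)).trans (W.step_sub (i := n + 1) (by omega) hj)

/-- Index at which a face appears. -/
noncomputable def MorseSeq.rk (W : MorseSeq V) (a : Finset V) : ℕ := sInf {i | a ∈ W.seq i}

theorem MorseSeq.rk_le (W : MorseSeq V) {a : Finset V} {i : ℕ} (h : a ∈ W.seq i) : W.rk a ≤ i :=
  Nat.sInf_le h

theorem MorseSeq.rk_mem (W : MorseSeq V) {a : Finset V} (h : a ∈ W.cplx) :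
    a ∈ W.seq (W.rk a) :=
  Nat.sInf_mem (s := {i | a ∈ W.seq i}) ⟨W.k, h⟩

theorem MorseSeq.rk_eq (W : MorseSeq V) {a : Finset V} {i : ℕ} (h1 : 1 ≤ i) (hi : i ≤ W.k)
    (h : a ∈ W.seq i \ W.seq (i - 1)) : W.rk a = i := by
  rw [Finset.mem_sdiff] at h
  have h2 := W.rk_le h.1
  by_contra hne
  exact h.2 (W.mono (by omega) (by omega) (W.rk_mem (W.mono hi le_rfl h.1)))

theorem MorseSeq.rk_new (W : MorseSeq V) {a : Finset V} (h : a ∈ W.cplx) :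
    1 ≤ W.rk a ∧ W.rk a ≤ W.k ∧ a ∈ W.seq (W.rk a) \ W.seq (W.rk a - 1) := by
  have h1 := W.rk_mem h
  have h0 : W.rk a ≠ 0 := by
    intro h0
    rw [h0, W.init] at h1
    simp at h1
  refine ⟨by omega, W.rk_le h, Finset.mem_sdiff.2 ⟨h1, fun h2 => ?_⟩⟩
  have := W.rk_le h2
  omega

theorem pair_eq {a b c d : Finset V} (h1 : a ⊂ b) (h2 : c ⊂ d)
    (h : ({a, b} : Finset (Finset V)) = {c, d}) : a = c ∧ b = d := by
  have ha : a ∈ ({c, d} : Finset (Finset V)) := by rw [← h]; simp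
  have hb : b ∈ ({c, d} : Finset (Finset V)) := by rw [← h]; simp
  simp only [Finset.mem_insert, Finset.mem_singleton] at ha hb
  rcases ha with rfl | rfl <;> rcases hb with rfl | rfl
  · exact absurd h1 (ssubset_irrefl _)
  · exact ⟨rfl, rfl⟩
  · exact absurd (h1.trans h2) (ssubset_irrefl _)
  · exact absurd h1 (ssubset_irrefl _)

theorem sdiff_sdiff_sub {K s : Finset (Finset V)} (h : s ⊆ K) : K \ (K \ s) = s := by
  rw [sdiff_sdiff_right_self]; exact Finset.inter_eq_right.2 h

theorem MorseSeq.tri (W : MorseSeq V) {a : Finset V} (h : a ∈ W.cplx) :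
    W.Critical a ∨ (∃ b, W.Regular a b) ∨ (∃ b, W.Regular b a) := by
  obtain ⟨h1, h2, h3⟩ := W.rk_new h
  rcases W.step _ h1 h2 with ⟨σ, τ, hf, he⟩ | ⟨ν, hf, he⟩
  · have e : W.seq (W.rk a) \ W.seq (W.rk a - 1) = {σ, τ} := by
      rw [he]; exact sdiff_sdiff_sub (by
        intro x hx; simp only [Finset.mem_insert, Finset.mem_singleton] at hx
        rcases hx with rfl | rfl; exacts [hf.1, hf.2.1])
    rw [e] at h3
    simp only [Finset.mem_insert, Finset.mem_singleton] at h3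
    have hr : W.Regular σ τ := ⟨_, h1, h2, hf.2.2.1, e⟩
    rcases h3 with h3 | h3
    · exact Or.inr (Or.inl ⟨τ, by rw [h3]; exact hr⟩)
    · exact Or.inr (Or.inr ⟨σ, by rw [h3]; exact hr⟩)
  · have e : W.seq (W.rk a) \ W.seq (W.rk a - 1) = {ν} := by
      rw [he]; exact sdiff_sdiff_sub (by simpa using hf.1)
    rw [e, Finset.mem_singleton] at h3
    exact Or.inl ⟨_, h1, h2, by rw [e, h3]⟩

theorem MorseSeq.crit_mem (W : MorseSeq V) {a : Finset V} (h : W.Critical a) : a ∈ W.cplx := by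
  obtain ⟨i, h1, h2, h3⟩ := h
  have : a ∈ W.seq i \ W.seq (i - 1) := by rw [h3]; simp
  exact W.mono h2 le_rfl (Finset.mem_sdiff.1 this).1

theorem MorseSeq.reg (W : MorseSeq V) {σ τ : Finset V} (h : W.Regular σ τ) :
    ∃ i, 1 ≤ i ∧ i ≤ W.k ∧ W.seq i \ W.seq (i - 1) = {σ, τ} ∧ IsFreePair (W.seq i) σ τ ∧
      W.rk σ = i ∧ W.rk τ = i ∧ σ ∈ W.cplx ∧ τ ∈ W.cplx ∧ σ.card + 1 = τ.card := by
  obtain ⟨i, h1, h2, hst, h3⟩ := h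
  have hs : σ ∈ W.seq i \ W.seq (i - 1) := by rw [h3]; simp
  have ht : τ ∈ W.seq i \ W.seq (i - 1) := by rw [h3]; simp
  have hs' := (Finset.mem_sdiff.1 hs).1
  have ht' := (Finset.mem_sdiff.1 ht).1
  have hfree : IsFreePair (W.seq i) σ τ := by
    rcases W.step i h1 h2 with ⟨σ', τ', hf, he⟩ | ⟨ν, hf, he⟩
    · have e : W.seq i \ W.seq (i - 1) = {σ', τ'} := by
        rw [he]; exact sdiff_sdiff_sub (by
          intro x hx; simp only [Finset.mem_insert, Finset.mem_singleton] at hx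
          rcases hx with rfl | rfl; exacts [hf.1, hf.2.1])
      obtain ⟨rfl, rfl⟩ := pair_eq hst hf.2.2.1 (h3.symm.trans e)
      exact hf
    · have e : W.seq i \ W.seq (i - 1) = {ν} := by
        rw [he]; exact sdiff_sdiff_sub (by simpa using hf.1)
      rw [e, Finset.mem_singleton] at hs ht
      rw [hs, ht] at hst
      exact absurd hst (ssubset_irrefl _)
  refine ⟨i, h1, h2, h3, hfree, W.rk_eq h1 h2 hs, W.rk_eq h1 h2 ht, W.mono h2 le_rfl hs',
    W.mono h2 le_rfl ht', ?_⟩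
  obtain ⟨v, hv, hvs⟩ := Finset.exists_of_ssubset hst
  have hsub : insert v σ ⊆ τ := Finset.insert_subset hv hst.1
  have := hfree.2.2.2 (insert v σ) ((W.cpx i h2 τ ht').2 _ hsub (Finset.insert_nonempty _ _))
    (Finset.ssubset_insert hvs)
  rw [← this, Finset.card_insert_of_notMem hvs]

theorem chInd_filter {K : Finset (Finset V)} (c : Finset V → ZMod 2) {a : Finset V} (ha : a ∈ K) :
    chInd (K.filter fun x => c x ≠ 0) a = c a := by
  have h01 : ∀ x : ZMod 2, x = 0 ∨ x = 1 := by decide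
  unfold chInd
  rcases h01 (c a) with h | h <;> simp [ha, h]

theorem chInd_ne {s : Finset (Finset V)} {a : Finset V} (h : chInd s a ≠ 0) : a ∈ s := by
  by_contra h'
  exact h (by simp [chInd, h'])

theorem chInd_zero {s : Finset (Finset V)} {a : Finset V} (h : a ∉ s) : chInd s a = 0 := by
  simp [chInd, h]

theorem chainSum_sub {K c : Finset (Finset V)} {f : Finset V → Finset (Finset V)}
    (h : ∀ x ∈ c, f x ⊆ K) : chainSum c f ⊆ K := by
  intro a ha
  obtain ⟨x, hx, hxa⟩ := Finset.mem_biUnion.1 (Finset.mem_filter.1 ha).1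
  exact h x hx hxa

/-- For a `p`-cycle `z` of `K`, `∧̃(∧(z))` is homologous to `z`; for a
`p`-cocycle `z` of `K`, `∨̃(∨(z))` is cohomologous to `z`. -/
theorem extension_of_reference_homologous (W : MorseSeq V)
    (Λ Vee : Finset V → Finset (Finset V))
    (hΛ : IsRefMap W Λ) (hV : IsCorefMap W Vee)
    (p : ℕ) (z : Finset (Finset V)) (hz : IsChainOf W.cplx p z) :
    (chainSum z bd = ∅ →
      Homologous W.cplx p (chainSum (chainSum z Λ) (extMap W Vee)) z) ∧
    (chainSum z (cobd W.cplx) = ∅ →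
      Cohomologous W.cplx p (chainSum (chainSum z Vee) (coextMap W Λ)) z) := by
  have hK : IsComplex W.cplx := W.cpx W.k le_rfl
  have hne : ∀ a ∈ W.cplx, a.Nonempty := fun a ha => (hK a ha).1
  have hzK : z ⊆ W.cplx := fun a ha => (hz a ha).1
  have hbdK : ∀ a ∈ W.cplx, bd a ⊆ W.cplx := by
    intro a ha x hx
    simp only [bd, Finset.mem_filter, Finset.mem_powerset] at hx
    exact (hK a ha).2 x hx.1 hx.2.1
  have hcobdK : ∀ a, cobd W.cplx a ⊆ W.cplx := fun a => Finset.filter_subset _ _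
  have hempty : ∀ a : Finset V, chInd ∅ a = 0 := fun a => by simp [chInd]
  have hRK : ∀ a b, W.Regular a b → a ∈ W.cplx ∧ b ∈ W.cplx ∧ inc a b = 1 := by
    intro a b h
    obtain ⟨i, _, _, _, hf, _, _, ha, hb, hc⟩ := W.reg h
    exact ⟨ha, hb, by simp [inc, hf.2.2.1.1, hc]⟩
  have hrkeq : ∀ a b, W.Regular a b → W.rk a = W.rk b := by
    intro a b h
    obtain ⟨i, _, _, _, hf, h1, h2, _⟩ := W.reg h
    rw [h1, h2]
  have hinj : ∀ a b a' b', W.Regular a b → W.Regular a' b' → W.rk a = W.rk a' →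
      a = a' ∧ b = b' := by
    intro a b a' b' h h' hrk
    obtain ⟨i, _, _, he, hf, h1, h2, _⟩ := W.reg h
    obtain ⟨i', _, _, he', hf', h1', h2', _⟩ := W.reg h'
    obtain rfl : i = i' := by omega
    exact pair_eq hf.2.2.1 hf'.2.2.1 (he.symm.trans he')
  have hlow : ∀ a b, W.Regular a b → ∀ r ∈ W.cplx, inc r b ≠ 0 → r ≠ a → W.rk r < W.rk a := by
    intro a b h r hr hi hra
    obtain ⟨hi1, hi2⟩ := inc_ne hi
    obtain ⟨i, hge, hle, he, hf, h1, h2, _⟩ := W.reg h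
    have hri : r ∈ W.seq i := (W.cpx i hle b hf.2.1).2 r hi1 (hne r hr)
    have : r ∈ W.seq (i - 1) := by
      by_contra hcon
      have : r ∈ W.seq i \ W.seq (i - 1) := Finset.mem_sdiff.2 ⟨hri, hcon⟩
      rw [he] at this
      simp only [Finset.mem_insert, Finset.mem_singleton] at this
      rcases this with rfl | rfl
      · exact hra rfl
      · omega
    have := W.rk_le this
    omega
  have hup : ∀ a b, W.Regular a b → ∀ r ∈ W.cplx, inc a r ≠ 0 → r ≠ b → W.rk b < W.rk r := by
    intro a b h r hr hi hrb
    obtain ⟨hi1, hi2⟩ := inc_ne hi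
    obtain ⟨i, hge, hle, he, hf, h1, h2, _⟩ := W.reg h
    by_contra hcon
    have : r ∈ W.seq i := W.mono (by omega) hle (W.rk_mem hr)
    refine hrb (hf.2.2.2 r this (hi1.ssubset_of_ne ?_))
    rintro rfl
    omega
  have hrkN : ∀ a ∈ W.cplx, W.rk a < W.k + 1 := fun a ha => by
    have := W.rk_le (i := W.k) ha
    omega
  have hfr : ∀ Υ, IsFrame W Υ → ∀ a ∈ W.cplx, ∀ k, ¬ W.Critical k → chInd (Υ a) k = 0 :=
    fun Υ h a ha k hk => chInd_zero fun h' => hk (h a ha k h').1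
  have hcr : ∀ Υ : Finset V → Finset (Finset V), (∀ ν, W.Critical ν → Υ ν = {ν}) →
      ∀ a k, W.Critical a → chInd (Υ a) k = if a = k then 1 else 0 := by
    intro Υ h a k ha
    rw [h a ha]
    simp [chInd, eq_comm]
  have hLr : ∀ a b, W.Regular a b → ∀ k, chInd (Λ b) k = 0 ∧
      ∑ r ∈ W.cplx, inc r b * chInd (Λ r) k = 0 := by
    intro a b h k
    obtain ⟨e1, e2⟩ := hΛ.2.2 b ⟨a, h⟩
    refine ⟨by rw [e1, hempty], ?_⟩
    have := chInd_chainSum' (hbdK b (hRK a b h).2.1) Λ k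
    rw [e2, hempty] at this
    rw [this]
    exact Finset.sum_congr rfl fun r hr => by rw [chInd_bd (hne r hr)]
  have hMr : ∀ a b, W.Regular a b → ∀ k, chInd (Vee a) k = 0 ∧
      ∑ r ∈ W.cplx, inc a r * chInd (Vee r) k = 0 := by
    intro a b h k
    obtain ⟨e1, e2⟩ := hV.2.2 a ⟨b, h⟩
    refine ⟨by rw [e1, hempty], ?_⟩
    have := chInd_chainSum' (hcobdK a) Vee k
    rw [e2, hempty] at this
    rw [this]
    exact Finset.sum_congr rfl fun r hr => by rw [chInd_cobd hr]
  have hsub : ∀ Υ, IsFrame W Υ → chainSum z Υ ⊆ W.cplx := fun Υ h =>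
    chainSum_sub fun x hx k hk => W.crit_mem (h x (hzK hx) k hk).1
  constructor
  · intro hcyc
    obtain ⟨c, hc1, hc2⟩ := abstract_morse W.cplx inc W.Regular W.Critical (fun a => a.card = p + 1)
      W.rk (W.k + 1) hrkN (fun a ha => W.tri ha) hRK
      (fun a b a' b' h h' e => (hinj a b a' b' h h' e).1) hlow hup
      (fun a b h ha r hr hi => by
        have := (inc_ne hi).2
        have h2 := (inc_ne (a := a) (b := b) (by rw [(hRK a b h).2.2]; decide)).2
        omega)
      (fun a ha b hb => inc_inc hK a b ha hb)
      (fun a k => chInd (Λ a) k) (fun a k => chInd (Vee a) k)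
      (hfr Λ hΛ.1) (hfr Vee hV.1) (hcr Λ hΛ.2.1) (hcr Vee hV.2.1) hLr hMr
      (chInd z) (fun a _ h => (hz a (chInd_ne h)).2)
      (fun a ha => by
        have := chInd_chainSum' hzK bd a
        rw [hcyc, hempty] at this
        rw [this]
        exact Finset.sum_congr rfl fun r hr => by rw [chInd_bd (hne a ha), mul_comm])
    refine ⟨W.cplx.filter fun x => c x ≠ 0, ?_, ?_⟩
    · intro x hx
      rw [Finset.mem_filter] at hx
      obtain ⟨a, ha, hap⟩ := hc1 x hx.2
      obtain ⟨_, _, _, _, _, _, _, _, _, h⟩ := W.reg ha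
      exact ⟨hx.1, by omega⟩
    · refine chInd_ext fun a => ?_
      rw [chInd_symmDiff]
      by_cases ha : a ∈ W.cplx
      · rw [chInd_chainSum' (Finset.filter_subset _ _), chInd_chainSum' (hsub Λ hΛ.1)]
        have e : ∀ x, chInd (extMap W Vee x) a = chInd (Vee a) x := fun x => by
          simp [chInd, extMap, ha]
        simp only [e, chInd_chainSum' hzK Λ]
        rw [← hc2 a ha]
        exact Finset.sum_congr rfl fun r hr => by
          rw [chInd_filter c hr, chInd_bd (hne a ha), mul_comm]
      · rw [chInd_zero fun h => ha (chainSum_sub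
          (fun x hx => hbdK x (Finset.mem_filter.1 hx).1) h),
          chInd_zero fun h => ha (chainSum_sub (f := extMap W Vee)
          (fun x hx => Finset.filter_subset _ _) h), chInd_zero fun h => ha (hzK h), add_zero]
  · intro hcyc
    obtain ⟨c, hc1, hc2⟩ := abstract_morse W.cplx (fun a b => inc b a) (fun a b => W.Regular b a)
      W.Critical (fun a => a.card = p + 1)
      (fun a => W.k - W.rk a) (W.k + 1) (fun a _ => by omega)
      (fun a ha => by
        rcases W.tri ha with h | h | h
        · exact Or.inl h
        · exact Or.inr (Or.inr h)
        · exact Or.inr (Or.inl h))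
      (fun a b h => ⟨(hRK _ _ h).2.1, (hRK _ _ h).1, (hRK _ _ h).2.2⟩)
      (fun a b a' b' h h' e => (hinj b a b' a' h h' (by
        have := hrkN _ (hRK _ _ h).2.1
        have := hrkN _ (hRK _ _ h').2.1
        have := hrkeq _ _ h
        have := hrkeq _ _ h'
        omega)).2)
      (fun a b h r hr hi hra => by
        have := hup b a h r hr hi hra
        have := hrkN r hr
        omega)
      (fun a b h r hr hi hrb => by
        have := hlow b a h r hr hi hrb
        have := hrkN b (hRK _ _ h).1
        omega)
      (fun a b h ha r hr hi => by
        have := (inc_ne hi).2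
        have h2 := (inc_ne (a := b) (b := a) (by rw [(hRK b a h).2.2]; decide)).2
        omega)
      (fun a ha b hb => by
        rw [← inc_inc hK b a hb ha]
        exact Finset.sum_congr rfl fun _ _ => mul_comm _ _)
      (fun a k => chInd (Vee a) k) (fun a k => chInd (Λ a) k)
      (hfr Vee hV.1) (hfr Λ hΛ.1) (hcr Vee hV.2.1) (hcr Λ hΛ.2.1)
      (fun a b h => hMr b a h) (fun a b h => hLr b a h)
      (chInd z) (fun a _ h => (hz a (chInd_ne h)).2)
      (fun a ha => by
        have := chInd_chainSum' hzK (cobd W.cplx) a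
        rw [hcyc, hempty] at this
        rw [this]
        exact Finset.sum_congr rfl fun r hr => by rw [chInd_cobd ha, mul_comm])
    refine ⟨W.cplx.filter fun x => c x ≠ 0, ?_, ?_⟩
    · intro x hx
      rw [Finset.mem_filter] at hx
      obtain ⟨a, ha, hap⟩ := hc1 x hx.2
      obtain ⟨_, _, _, _, _, _, _, _, _, h⟩ := W.reg ha
      have := (hne x hx.1).card_pos
      exact ⟨hx.1, by omega⟩
    · refine chInd_ext fun a => ?_
      rw [chInd_symmDiff]
      by_cases ha : a ∈ W.cplx
      · rw [chInd_chainSum' (Finset.filter_subset _ _), chInd_chainSum' (hsub Vee hV.1)]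
        have e : ∀ x, chInd (coextMap W Λ x) a = chInd (Λ a) x := fun x => by
          simp [chInd, coextMap, ha]
        simp only [e, chInd_chainSum' hzK Vee]
        rw [← hc2 a ha]
        exact Finset.sum_congr rfl fun r hr => by
          rw [chInd_filter c hr, chInd_cobd ha, mul_comm]
      · rw [chInd_zero fun h => ha (chainSum_sub (fun x hx => hcobdK x) h),
          chInd_zero fun h => ha (chainSum_sub (f := coextMap W Λ)
          (fun x hx => Finset.filter_subset _ _) h), chInd_zero fun h => ha (hzK h), add_zero]
end

section
/- Let W be a Morse sequence on K with reference pair (∧,∨), extension map ∧̃ and coextension map ∨̃, gradient flow Φ and coflow Φ*. Then for every p-chain c of K, the iterates of Φ on c stabilize and their stable value is ∧̃(∧(c)): there exists i ≥ 0 with Φ^{i+1}(c) = Φ^i(c), and for any such i, Φ^i(c) = ∧̃_p(∧_p(c)). Dually, the iterates of Φ* on c stabilize at ∨̃_p(∨_p(c)). -/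
/-! ## Basic notions: simplicial complexes, collapses, expansions, fillings -/

variable {V : Type*} [DecidableEq V]

/-! ## The gradient flow and coflow -/

open Classical in
/-- The discrete vector field of `W` on simplices: `Vf W σ = {τ}` if `(σ,τ)` is a regular
pair for `W`, and `Vf W ν = 0` if `ν` is critical or upper regular. -/
noncomputable def Vf (W : MorseSeq V) (σ : Finset V) : Finset (Finset V) :=
  W.cplx.filter fun τ => W.Regular σ τ

open Classical in
/-- The dual discrete vector field of `W` on simplices: `Vfs W τ = {σ}` if `(σ,τ)` is a
regular pair for `W`, and `Vfs W ν = 0` if `ν` is critical or lower regular. -/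
noncomputable def Vfs (W : MorseSeq V) (τ : Finset V) : Finset (Finset V) :=
  W.cplx.filter fun σ => W.Regular σ τ

/-- The gradient flow on a simplex: `Φ(ν) = ν + ∂(V(ν)) + V(∂(ν))`. -/
noncomputable def PhiSimp (W : MorseSeq V) (ν : Finset V) : Finset (Finset V) :=
  symmDiff {ν} (symmDiff (chainSum (Vf W ν) bd) (chainSum (bd ν) (Vf W)))

/-- The gradient flow `Φ` of `W`, extended linearly to chains. -/
noncomputable def Phi (W : MorseSeq V) (c : Finset (Finset V)) : Finset (Finset V) :=
  chainSum c (PhiSimp W)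

/-- The gradient coflow on a simplex: `Φ*(ν) = ν + δ(V*(ν)) + V*(δ(ν))`. -/
noncomputable def PhiStarSimp (W : MorseSeq V) (ν : Finset V) : Finset (Finset V) :=
  symmDiff {ν} (symmDiff (chainSum (Vfs W ν) (cobd W.cplx)) (chainSum (cobd W.cplx ν) (Vfs W)))

/-- The gradient coflow `Φ*` of `W`, extended linearly to chains. -/
noncomputable def PhiStar (W : MorseSeq V) (c : Finset (Finset V)) : Finset (Finset V) :=
  chainSum c (PhiStarSimp W)

/-! ## Combinatorics of Morse sequences -/

namespace FlowProof

theorem seq_mono (W : MorseSeq V) {i j : ℕ} (hij : i ≤ j) (hj : j ≤ W.k) :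
    W.seq i ⊆ W.seq j := by
  induction j, hij using Nat.le_induction with
  | base => exact Finset.Subset.refl _
  | succ n hn ih =>
    refine (ih (by omega)).trans ?_
    rcases W.step (n + 1) (by omega) hj with ⟨σ, τ, -, h⟩ | ⟨ν, -, h⟩
    · simp only [Nat.add_sub_cancel] at h; rw [h]; exact Finset.sdiff_subset
    · simp only [Nat.add_sub_cancel] at h; rw [h]; exact Finset.sdiff_subset

/-- The step at which a face is added. -/
noncomputable def idx (W : MorseSeq V) (x : Finset V) : ℕ := sInf {i | x ∈ W.seq i}

theorem idx_eq (W : MorseSeq V) {i : ℕ} (hi : 1 ≤ i) (hk : i ≤ W.k) {x : Finset V}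
    (hx : x ∈ W.seq i \ W.seq (i - 1)) : idx W x = i := by
  rw [Finset.mem_sdiff] at hx
  apply le_antisymm
  · exact Nat.sInf_le hx.1
  · by_contra hlt
    have hm : x ∈ W.seq (idx W x) :=
      Nat.sInf_mem (s := {i | x ∈ W.seq i}) ⟨i, hx.1⟩
    exact hx.2 (seq_mono W (by omega) (by omega) hm)

theorem idx_spec (W : MorseSeq V) {x : Finset V} {i : ℕ} (hi : i ≤ W.k) (hx : x ∈ W.seq i) :
    1 ≤ idx W x ∧ idx W x ≤ i ∧ x ∈ W.seq (idx W x) \ W.seq (idx W x - 1) := by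
  have hm : x ∈ W.seq (idx W x) := Nat.sInf_mem (s := {i | x ∈ W.seq i}) ⟨i, hx⟩
  have h1 : 1 ≤ idx W x := by
    by_contra h
    have h0 : idx W x = 0 := by omega
    rw [h0, W.init] at hm
    simp at hm
  refine ⟨h1, Nat.sInf_le hx, ?_⟩
  rw [Finset.mem_sdiff]
  refine ⟨hm, fun h => ?_⟩
  have : idx W x ≤ idx W x - 1 := Nat.sInf_le (s := {i | x ∈ W.seq i}) h
  omega

theorem cases3 (W : MorseSeq V) {x : Finset V} (hx : x ∈ W.cplx) :
    W.Critical x ∨ W.LowerRegular x ∨ W.UpperRegular x := by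
  obtain ⟨h1, hk, hm⟩ := idx_spec W le_rfl hx
  rcases W.step _ h1 hk with ⟨σ, τ, hf, h⟩ | ⟨ν, hf, h⟩
  · have he : W.seq (idx W x) \ W.seq (idx W x - 1) = {σ, τ} := by
      rw [h, Finset.sdiff_sdiff_eq_self]
      intro y hy
      simp only [Finset.mem_insert, Finset.mem_singleton] at hy
      rcases hy with rfl | rfl
      exacts [hf.1, hf.2.1]
    have hr : W.Regular σ τ := ⟨_, h1, hk, hf.2.2.1, he⟩
    rw [he] at hm
    simp only [Finset.mem_insert, Finset.mem_singleton] at hm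
    rcases hm with rfl | rfl
    · exact Or.inr (Or.inl ⟨_, hr⟩)
    · exact Or.inr (Or.inr ⟨_, hr⟩)
  · have he : W.seq (idx W x) \ W.seq (idx W x - 1) = {ν} := by
      rw [h, Finset.sdiff_sdiff_eq_self]
      simpa using hf.1
    rw [he] at hm
    simp only [Finset.mem_singleton] at hm
    subst hm
    exact Or.inl ⟨_, h1, hk, he⟩

theorem crit_mem (W : MorseSeq V) {x : Finset V} (hx : W.Critical x) : x ∈ W.cplx := by
  obtain ⟨i, h1, hk, h⟩ := hx
  have : x ∈ W.seq i \ W.seq (i - 1) := by rw [h]; simp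
  exact seq_mono W hk le_rfl (Finset.mem_sdiff.1 this).1

theorem reg_data (W : MorseSeq V) {σ τ : Finset V} (h : W.Regular σ τ) :
    σ ∈ W.cplx ∧ τ ∈ W.cplx ∧ σ ⊂ τ ∧ idx W τ = idx W σ ∧
      W.seq (idx W σ) \ W.seq (idx W σ - 1) = {σ, τ} := by
  obtain ⟨i, h1, hk, hs, h⟩ := h
  have hσ : σ ∈ W.seq i \ W.seq (i - 1) := by rw [h]; simp
  have hτ : τ ∈ W.seq i \ W.seq (i - 1) := by rw [h]; simp
  have e1 := idx_eq W h1 hk hσ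
  have e2 := idx_eq W h1 hk hτ
  refine ⟨seq_mono W hk le_rfl (Finset.mem_sdiff.1 hσ).1,
    seq_mono W hk le_rfl (Finset.mem_sdiff.1 hτ).1, hs, by omega, ?_⟩
  rw [e1, h]

theorem pair_eq {σ τ σ' τ' : Finset V} (h : σ ⊂ τ) (h' : σ' ⊂ τ')
    (e : ({σ, τ} : Finset (Finset V)) = {σ', τ'}) : σ = σ' ∧ τ = τ' := by
  have a1 : σ ∈ ({σ', τ'} : Finset (Finset V)) := by rw [← e]; simp
  have a2 : τ ∈ ({σ', τ'} : Finset (Finset V)) := by rw [← e]; simp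
  simp only [Finset.mem_insert, Finset.mem_singleton] at a1 a2
  rcases a1 with rfl | rfl <;> rcases a2 with rfl | rfl
  · exact absurd h (ssubset_irrefl _)
  · exact ⟨rfl, rfl⟩
  · exact absurd (h.trans h') (ssubset_irrefl _)
  · exact absurd h (ssubset_irrefl _)

theorem reg_card (W : MorseSeq V) {σ τ : Finset V} (h : W.Regular σ τ) :
    σ.card + 1 = τ.card := by
  obtain ⟨i, h1, hk, hs, h⟩ := h
  rcases W.step _ h1 hk with ⟨σ', τ', hf, h'⟩ | ⟨ν, hf, h'⟩
  · have he : W.seq i \ W.seq (i - 1) = {σ', τ'} := by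
      rw [h', Finset.sdiff_sdiff_eq_self]
      intro y hy
      simp only [Finset.mem_insert, Finset.mem_singleton] at hy
      rcases hy with rfl | rfl
      exacts [hf.1, hf.2.1]
    obtain ⟨rfl, rfl⟩ := pair_eq hs hf.2.2.1 (h.symm.trans he)
    obtain ⟨v, hv, hv'⟩ := Finset.exists_of_ssubset hs
    have hsub : insert v σ ⊆ τ := Finset.insert_subset hv hs.1
    have hm : insert v σ ∈ W.seq i :=
      (W.cpx i hk τ hf.2.1).2 _ hsub (Finset.insert_nonempty _ _)
    have := hf.2.2.2 _ hm (Finset.ssubset_insert hv')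
    rw [← this, Finset.card_insert_of_notMem hv']
  · have he : W.seq i \ W.seq (i - 1) = {ν} := by
      rw [h', Finset.sdiff_sdiff_eq_self]
      simpa using hf.1
    rw [he] at h
    have a1 : σ ∈ ({ν} : Finset (Finset V)) := by rw [h]; simp
    have a2 : τ ∈ ({ν} : Finset (Finset V)) := by rw [h]; simp
    simp only [Finset.mem_singleton] at a1 a2
    subst a1; subst a2
    exact absurd hs (ssubset_irrefl _)

theorem reg_right (W : MorseSeq V) {σ τ τ' : Finset V} (h : W.Regular σ τ)
    (h' : W.Regular σ τ') : τ = τ' := by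
  obtain ⟨-, -, a, -, b⟩ := reg_data W h
  obtain ⟨-, -, a', -, b'⟩ := reg_data W h'
  exact (pair_eq a a' (b.symm.trans b')).2

theorem reg_left (W : MorseSeq V) {σ σ' τ : Finset V} (h : W.Regular σ τ)
    (h' : W.Regular σ' τ) : σ = σ' := by
  obtain ⟨-, -, a, e, b⟩ := reg_data W h
  obtain ⟨-, -, a', e', b'⟩ := reg_data W h'
  rw [← e] at b
  rw [← e'] at b'
  exact (pair_eq a a' (b.symm.trans b')).1

theorem reg_not (W : MorseSeq V) {σ τ ρ : Finset V} (h : W.Regular σ τ)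
    (h' : W.Regular τ ρ) : False := by
  obtain ⟨-, -, a, e, b⟩ := reg_data W h
  obtain ⟨-, -, a', e', b'⟩ := reg_data W h'
  rw [← e] at b
  obtain ⟨rfl, -⟩ := pair_eq a a' (b.symm.trans b')
  exact ssubset_irrefl _ a

theorem bd_ssubset {z y : Finset V} (h : z ∈ bd y) : z ⊂ y ∧ z.Nonempty := by
  simp only [bd, Finset.mem_filter, Finset.mem_powerset] at h
  refine ⟨h.1.ssubset_of_ne ?_, h.2.1⟩
  rintro rfl
  omega

theorem bd_mem (W : MorseSeq V) {z y : Finset V} (hy : y ∈ W.cplx) (h : z ∈ bd y) :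
    z ∈ W.cplx :=
  (W.cpx _ le_rfl y hy).2 z (bd_ssubset h).1.1 (bd_ssubset h).2

theorem bd_idx (W : MorseSeq V) {z y : Finset V} (hy : y ∈ W.cplx) (h : z ∈ bd y) :
    idx W z < idx W y ∨ W.Regular z y := by
  obtain ⟨h1, hk, hm⟩ := idx_spec W le_rfl hy
  have hz : z ∈ W.seq (idx W y) :=
    (W.cpx _ hk y (Finset.mem_sdiff.1 hm).1).2 z (bd_ssubset h).1.1 (bd_ssubset h).2
  obtain ⟨h1', hk', hm'⟩ := idx_spec W hk hz
  rcases hk'.lt_or_eq with hlt | heq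
  · exact Or.inl hlt
  right
  rw [heq] at hm'
  have hzy := (bd_ssubset h).1
  rcases cases3 W hy with ⟨i, hi, hik, hc⟩ | ⟨τ, hr⟩ | ⟨σ, hr⟩
  · have := idx_eq W hi hik (x := y) (by rw [hc]; simp)
    rw [this, hc] at hm'
    simp only [Finset.mem_singleton] at hm'
    subst hm'
    exact absurd hzy (ssubset_irrefl _)
  · obtain ⟨-, -, a, e, b⟩ := reg_data W hr
    rw [b] at hm'
    simp only [Finset.mem_insert, Finset.mem_singleton] at hm'
    rcases hm' with rfl | rfl
    · exact absurd hzy (ssubset_irrefl _)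
    · exact absurd (hzy.trans a) (ssubset_irrefl _)
  · obtain ⟨-, -, a, e, b⟩ := reg_data W hr
    rw [e, b] at hm'
    simp only [Finset.mem_insert, Finset.mem_singleton] at hm'
    rcases hm' with rfl | rfl
    · exact hr
    · exact absurd hzy (ssubset_irrefl _)

theorem reg_bd (W : MorseSeq V) {σ τ : Finset V} (h : W.Regular σ τ) : σ ∈ bd τ := by
  have hd := reg_data W h
  simp only [bd, Finset.mem_filter, Finset.mem_powerset]
  exact ⟨hd.2.2.1.1, (W.cpx _ le_rfl σ hd.1).1, reg_card W h⟩

theorem mem_Vf (W : MorseSeq V) {σ τ : Finset V} : τ ∈ Vf W σ ↔ W.Regular σ τ := by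
  simp only [Vf, Finset.mem_filter, and_iff_right_iff_imp]
  exact fun h => (reg_data W h).2.1

theorem mem_Vfs (W : MorseSeq V) {σ τ : Finset V} : σ ∈ Vfs W τ ↔ W.Regular σ τ := by
  simp only [Vfs, Finset.mem_filter, and_iff_right_iff_imp]
  exact fun h => (reg_data W h).1

/-! ## Matrices -/

open Matrix

/-- Matrix of a map on simplices. -/
def mat (K : Finset (Finset V)) (f : Finset V → Finset (Finset V)) : Matrix K K (ZMod 2) :=
  Matrix.of fun x y => if x.1 ∈ f y.1 then 1 else 0

/-- Vector of a chain. -/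
def vec (K : Finset (Finset V)) (c : Finset (Finset V)) : K → ZMod 2 :=
  fun x => if x.1 ∈ c then 1 else 0

theorem mat_apply (K : Finset (Finset V)) (f : Finset V → Finset (Finset V)) (x y : K) :
    mat K f x y = if x.1 ∈ f y.1 then 1 else 0 := rfl

theorem mem_chainSum {c : Finset (Finset V)} {f : Finset V → Finset (Finset V)} {x : Finset V} :
    x ∈ chainSum c f ↔ (c.filter fun σ => x ∈ f σ).card % 2 = 1 := by
  simp only [chainSum, Finset.mem_filter, and_iff_right_iff_imp, Finset.mem_biUnion]
  intro h
  have : 0 < (c.filter fun σ => x ∈ f σ).card := by omega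
  obtain ⟨a, ha⟩ := Finset.card_pos.1 this
  exact ⟨a, Finset.mem_filter.1 ha⟩

theorem chainSum_sub {K c : Finset (Finset V)} {f : Finset V → Finset (Finset V)}
    (h : ∀ x ∈ c, f x ⊆ K) : chainSum c f ⊆ K :=
  (Finset.filter_subset _ _).trans (Finset.biUnion_subset.2 h)

theorem vec_chainSum {K c : Finset (Finset V)} (f : Finset V → Finset (Finset V))
    (hc : c ⊆ K) : vec K (chainSum c f) = mat K f *ᵥ vec K c := by
  ext x
  have h1 : (mat K f *ᵥ vec K c) x = ((c.filter fun σ => x.1 ∈ f σ).card : ZMod 2) := by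
    simp only [Matrix.mulVec, dotProduct, mat_apply, vec]
    rw [Finset.sum_coe_sort K
      (fun y => (if x.1 ∈ f y then (1 : ZMod 2) else 0) * (if y ∈ c then 1 else 0))]
    rw [Finset.card_filter, Nat.cast_sum, ← Finset.sum_subset hc]
    · refine Finset.sum_congr rfl fun y hy => ?_
      simp [hy]
    · intro y _ hy
      simp [hy]
  rw [h1, vec]
  simp only [mem_chainSum]
  generalize (c.filter fun σ => x.1 ∈ f σ).card = n
  rcases Nat.mod_two_eq_zero_or_one n with h | h
  · rw [if_neg (by omega)]
    exact ((ZMod.natCast_eq_zero_iff_even).2 (Nat.even_iff.2 h)).symm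
  · rw [if_pos h]
    exact ((ZMod.natCast_eq_one_iff_odd).2 (Nat.odd_iff.2 h)).symm

theorem vec_inj {K c d : Finset (Finset V)} (hc : c ⊆ K) (hd : d ⊆ K)
    (h : vec K c = vec K d) : c = d := by
  have key : ∀ x (hx : x ∈ K), x ∈ c ↔ x ∈ d := by
    intro x hx
    have := congrFun h ⟨x, hx⟩
    simp only [vec] at this
    by_cases h1 : x ∈ c <;> by_cases h2 : x ∈ d <;> simp_all
  ext x
  exact ⟨fun hx => (key x (hc hx)).1 hx, fun hx => (key x (hd hx)).2 hx⟩

theorem vec_symmDiff (K c d : Finset (Finset V)) :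
    vec K (symmDiff c d) = vec K c + vec K d := by
  ext x
  simp only [vec, Pi.add_apply, Finset.mem_symmDiff]
  by_cases h1 : x.1 ∈ c <;> by_cases h2 : x.1 ∈ d <;> simp [h1, h2]
  decide

theorem mat_comp {K : Finset (Finset V)} (f g : Finset V → Finset (Finset V)) (x y : K)
    (hg : g y.1 ⊆ K) : vec K (chainSum (g y.1) f) x = (mat K f * mat K g) x y := by
  rw [vec_chainSum f hg]
  rfl

theorem mat_flow {K : Finset (Finset V)} (f g h : Finset V → Finset (Finset V))
    (hf : ∀ x ∈ K, f x ⊆ K) (hg : ∀ x ∈ K, g x ⊆ K)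
    (hh : ∀ x, h x = symmDiff {x} (symmDiff (chainSum (f x) g) (chainSum (g x) f))) :
    mat K h = 1 + (mat K g * mat K f + mat K f * mat K g) := by
  ext x y
  have e : mat K h x y = vec K (h y.1) x := rfl
  rw [e, hh, vec_symmDiff, vec_symmDiff, Pi.add_apply, Pi.add_apply,
    mat_comp _ _ _ _ (hf _ y.2), mat_comp _ _ _ _ (hg _ y.2)]
  simp only [Matrix.add_apply]
  congr 1
  simp only [vec, Finset.mem_singleton, Matrix.one_apply, Subtype.ext_iff]

theorem vec_iterate {K c : Finset (Finset V)} (f : Finset V → Finset (Finset V))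
    (hf : ∀ x ∈ K, f x ⊆ K) (hc : c ⊆ K) (n : ℕ) :
    (fun c => chainSum c f)^[n] c ⊆ K ∧
      vec K ((fun c => chainSum c f)^[n] c) = (mat K f ^ n) *ᵥ vec K c := by
  induction n with
  | zero => simpa using hc
  | succ n ih =>
    rw [Function.iterate_succ_apply']
    refine ⟨chainSum_sub fun x hx => hf x (ih.1 hx), ?_⟩
    rw [vec_chainSum f ih.1, ih.2, pow_succ', Matrix.mulVec_mulVec]

/-- General wrap-up: if large powers of the flow matrix are `Q`, iterates stabilize at `Q`. -/
theorem wrapup {K c d : Finset (Finset V)} (f : Finset V → Finset (Finset V))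
    (hf : ∀ x ∈ K, f x ⊆ K) (hc : c ⊆ K) (hd : d ⊆ K) (Q : Matrix K K (ZMod 2)) (N : ℕ)
    (hQ : ∀ n, N ≤ n → mat K f ^ n = Q) (hdQ : vec K d = Q *ᵥ vec K c)
    (F : Finset (Finset V) → Finset (Finset V)) (hF : F = fun c => chainSum c f) :
    (∃ i, F^[i + 1] c = F^[i] c) ∧ ∀ i, F^[i + 1] c = F^[i] c → F^[i] c = d := by
  subst hF
  have hN : ∀ n, N ≤ n → (fun c => chainSum c f)^[n] c = d := by
    intro n hn
    obtain ⟨h1, h2⟩ := vec_iterate f hf hc n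
    refine vec_inj h1 hd ?_
    rw [h2, hQ n hn, hdQ]
  refine ⟨⟨N, by rw [hN _ le_rfl, hN _ (Nat.le_succ N)]⟩, fun i hi => ?_⟩
  have hst : ∀ m, (fun c => chainSum c f)^[i + m] c = (fun c => chainSum c f)^[i] c := by
    intro m
    induction m with
    | zero => rfl
    | succ m ih =>
      rw [← add_assoc, Function.iterate_succ_apply', ih, ← Function.iterate_succ_apply' (fun c => chainSum c f)]
      exact hi
  rw [← hst N, hN _ (by omega)]

section Main

variable (W : MorseSeq V) (Λ Vee : Finset V → Finset (Finset V))

theorem Vf_sub : ∀ x ∈ W.cplx, Vf W x ⊆ W.cplx :=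
  fun _ _ _ h => (reg_data W ((mem_Vf W).1 h)).2.1

theorem Vfs_sub : ∀ x ∈ W.cplx, Vfs W x ⊆ W.cplx :=
  fun _ _ _ h => (reg_data W ((mem_Vfs W).1 h)).1

theorem bd_sub : ∀ x ∈ W.cplx, bd x ⊆ W.cplx := fun _ hx _ hz => bd_mem W hx hz

theorem cobd_sub : ∀ x ∈ W.cplx, cobd W.cplx x ⊆ W.cplx :=
  fun _ _ => Finset.filter_subset _ _

theorem symm_sub {K a b : Finset (Finset V)} (ha : a ⊆ K) (hb : b ⊆ K) : symmDiff a b ⊆ K := by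
  intro x hx
  rcases Finset.mem_symmDiff.1 hx with h | h
  exacts [ha h.1, hb h.1]

theorem Phi_sub : ∀ x ∈ W.cplx, PhiSimp W x ⊆ W.cplx := fun x hx =>
  symm_sub (by simpa using hx) (symm_sub
    (chainSum_sub fun y hy => bd_sub W y (Vf_sub W x hx hy))
    (chainSum_sub fun y hy => Vf_sub W y (bd_sub W x hx hy)))

theorem PhiStar_sub : ∀ x ∈ W.cplx, PhiStarSimp W x ⊆ W.cplx := fun x hx =>
  symm_sub (by simpa using hx) (symm_sub
    (chainSum_sub fun y hy => cobd_sub W y (Vfs_sub W x hx hy))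
    (chainSum_sub fun y hy => Vfs_sub W y (cobd_sub W x hx hy)))

theorem mat_Phi : mat W.cplx (PhiSimp W) =
    1 + (mat W.cplx bd * mat W.cplx (Vf W) + mat W.cplx (Vf W) * mat W.cplx bd) :=
  mat_flow _ _ _ (Vf_sub W) (bd_sub W) fun _ => rfl

theorem mat_cobd : mat W.cplx (cobd W.cplx) = (mat W.cplx bd)ᵀ := by
  ext x y
  rw [Matrix.transpose_apply, mat_apply, mat_apply]
  refine if_congr ?_ rfl rfl
  have := (W.cpx _ le_rfl y.1 y.2).1
  simp [cobd, bd, this]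

theorem mat_Vfs : mat W.cplx (Vfs W) = (mat W.cplx (Vf W))ᵀ := by
  ext x y
  rw [Matrix.transpose_apply, mat_apply, mat_apply]
  exact if_congr ((mem_Vfs W).trans (mem_Vf W).symm) rfl rfl

theorem mat_PhiStar : mat W.cplx (PhiStarSimp W) = (mat W.cplx (PhiSimp W))ᵀ := by
  rw [mat_Phi, mat_flow (Vfs W) (cobd W.cplx) (PhiStarSimp W) (Vfs_sub W) (cobd_sub W)
    fun _ => rfl, mat_cobd, mat_Vfs]
  simp only [Matrix.transpose_add, Matrix.transpose_mul, Matrix.transpose_one]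
  rw [add_comm (_ᵀ * _ᵀ)]

theorem mat_ext : mat W.cplx (extMap W Vee) = (mat W.cplx Vee)ᵀ := by
  ext x y
  rw [Matrix.transpose_apply, mat_apply, mat_apply]
  refine if_congr ?_ rfl rfl
  simp [extMap]

variable {W Λ Vee}

theorem mat_ne {K : Finset (Finset V)} {f : Finset V → Finset (Finset V)} {x y : K}
    (h : mat K f x y ≠ 0) : x.1 ∈ f y.1 := by
  by_contra hn
  exact h (by rw [mat_apply, if_neg hn])

/-- `Λ` kills `V` and `∂V`. -/
theorem ref_Phi (hΛ : IsRefMap W Λ) :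
    mat W.cplx Λ * mat W.cplx (PhiSimp W) = mat W.cplx Λ := by
  have h1 : mat W.cplx Λ * mat W.cplx (Vf W) = 0 := by
    ext x y
    rw [Matrix.mul_apply]
    refine Finset.sum_eq_zero fun z _ => ?_
    by_cases hz : mat W.cplx (Vf W) z y = 0
    · rw [hz, mul_zero]
    · have := (hΛ.2.2 z.1 ⟨_, (mem_Vf W).1 (mat_ne hz)⟩).1
      rw [mat_apply, this]; simp
  have h2 : mat W.cplx Λ * mat W.cplx bd * mat W.cplx (Vf W) = 0 := by
    ext x y
    rw [Matrix.mul_apply]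
    refine Finset.sum_eq_zero fun z _ => ?_
    by_cases hz : mat W.cplx (Vf W) z y = 0
    · rw [hz, mul_zero]
    · have := (hΛ.2.2 z.1 ⟨_, (mem_Vf W).1 (mat_ne hz)⟩).2
      rw [← mat_comp _ _ _ _ (bd_sub W _ z.2), this]
      simp [vec]
  rw [mat_Phi, mul_add, mul_add, mul_one, ← mul_assoc, ← mul_assoc, h1, h2]
  simp

theorem coref_Phi (hV : IsCorefMap W Vee) :
    mat W.cplx (PhiSimp W) * (mat W.cplx Vee)ᵀ = (mat W.cplx Vee)ᵀ := by
  have h1 : mat W.cplx Vee * mat W.cplx (Vfs W) = 0 := by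
    ext x y
    rw [Matrix.mul_apply]
    refine Finset.sum_eq_zero fun z _ => ?_
    by_cases hz : mat W.cplx (Vfs W) z y = 0
    · rw [hz, mul_zero]
    · have := (hV.2.2 z.1 ⟨_, (mem_Vfs W).1 (mat_ne hz)⟩).1
      rw [mat_apply, this]; simp
  have h2 : mat W.cplx Vee * mat W.cplx (cobd W.cplx) * mat W.cplx (Vfs W) = 0 := by
    ext x y
    rw [Matrix.mul_apply]
    refine Finset.sum_eq_zero fun z _ => ?_
    by_cases hz : mat W.cplx (Vfs W) z y = 0
    · rw [hz, mul_zero]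
    · have := (hV.2.2 z.1 ⟨_, (mem_Vfs W).1 (mat_ne hz)⟩).2
      rw [← mat_comp _ _ _ _ (cobd_sub W _ z.2), this]
      simp [vec]
  have h3 : mat W.cplx Vee * mat W.cplx (PhiStarSimp W) = mat W.cplx Vee := by
    rw [mat_flow (Vfs W) (cobd W.cplx) (PhiStarSimp W) (Vfs_sub W) (cobd_sub W)
      fun _ => rfl, mul_add, mul_add, mul_one, ← mul_assoc, ← mul_assoc, h1, h2]
    simp
  rw [mat_PhiStar] at h3
  conv_rhs => rw [← h3]
  rw [Matrix.transpose_mul, Matrix.transpose_transpose]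

theorem VD_zero {x y : W.cplx} (h : ∀ z, z ∈ bd y.1 → W.Regular z x.1 → False) :
    (mat W.cplx (Vf W) * mat W.cplx bd) x y = 0 := by
  rw [Matrix.mul_apply]
  refine Finset.sum_eq_zero fun z _ => ?_
  by_contra hne
  exact h z.1 (mat_ne (right_ne_zero_of_mul hne))
    ((mem_Vf W).1 (mat_ne (left_ne_zero_of_mul hne)))

theorem DV_zero {x y : W.cplx} (h : ∀ z, W.Regular y.1 z → x.1 ∈ bd z → False) :
    (mat W.cplx bd * mat W.cplx (Vf W)) x y = 0 := by
  rw [Matrix.mul_apply]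
  refine Finset.sum_eq_zero fun z _ => ?_
  by_contra hne
  exact h z.1 ((mem_Vf W).1 (mat_ne (right_ne_zero_of_mul hne)))
    (mat_ne (left_ne_zero_of_mul hne))

theorem Phi_upper {x y : W.cplx} (hy : W.UpperRegular y.1)
    (hne : mat W.cplx (PhiSimp W) x y ≠ 0) :
    W.UpperRegular x.1 ∧ idx W x.1 < idx W y.1 := by
  obtain ⟨σ, hσ⟩ := hy
  by_contra hcon
  apply hne
  rw [mat_Phi, Matrix.add_apply, Matrix.add_apply,
    DV_zero fun z hz _ => reg_not W hσ hz, zero_add]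
  by_cases hxy : x = y
  · subst hxy
    have hs : (mat W.cplx (Vf W) * mat W.cplx bd) x x = 1 := by
      rw [Matrix.mul_apply, Finset.sum_eq_single (⟨σ, (reg_data W hσ).1⟩ : W.cplx)]
      · rw [mat_apply, mat_apply, if_pos ((mem_Vf W).2 hσ), if_pos (reg_bd W hσ), one_mul]
      · intro z _ hz
        by_contra hne
        apply hz
        exact Subtype.ext (reg_left W ((mem_Vf W).1 (mat_ne (left_ne_zero_of_mul hne))) hσ)
      · simp
    rw [hs, Matrix.one_apply_eq]
    decide
  · rw [Matrix.one_apply_ne hxy, zero_add]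
    refine VD_zero fun z hz hzx => hcon ⟨⟨z, hzx⟩, ?_⟩
    rw [(reg_data W hzx).2.2.2.1]
    rcases bd_idx W y.2 hz with h | h
    · exact h
    · exact absurd (Subtype.ext (reg_right W hzx h)) hxy

theorem Phi_lower {x y : W.cplx} (hy : W.LowerRegular y.1)
    (hne : mat W.cplx (PhiSimp W) x y ≠ 0) : idx W x.1 < idx W y.1 := by
  obtain ⟨τ, hτ⟩ := hy
  by_contra hcon
  apply hne
  have hVD : (mat W.cplx (Vf W) * mat W.cplx bd) x y = 0 := by
    refine VD_zero fun z hz hzx => hcon ?_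
    rw [(reg_data W hzx).2.2.2.1]
    rcases bd_idx W y.2 hz with h | h
    · exact h
    · exact (reg_not W h hτ).elim
  rw [mat_Phi, Matrix.add_apply, Matrix.add_apply, hVD, add_zero]
  by_cases hxy : x = y
  · subst hxy
    have hs : (mat W.cplx bd * mat W.cplx (Vf W)) x x = 1 := by
      rw [Matrix.mul_apply, Finset.sum_eq_single (⟨τ, (reg_data W hτ).2.1⟩ : W.cplx)]
      · rw [mat_apply, mat_apply, if_pos ((mem_Vf W).2 hτ), if_pos (reg_bd W hτ), one_mul]
      · intro z _ hz
        by_contra hne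
        apply hz
        exact Subtype.ext (reg_right W ((mem_Vf W).1 (mat_ne (right_ne_zero_of_mul hne))) hτ)
      · simp
    rw [hs, Matrix.one_apply_eq]
    decide
  · rw [Matrix.one_apply_ne hxy, zero_add]
    refine DV_zero fun z hz hxz => ?_
    obtain rfl := reg_right W hz hτ
    have hd := reg_data W hz
    rcases bd_idx W hd.2.1 hxz with h | h
    · exact hcon (by rw [← hd.2.2.2.1]; exact h)
    · exact hxy (Subtype.ext (reg_left W h hz))

theorem upper_nil (i n : ℕ) (hn : i ≤ n) (z y : W.cplx) (hy : W.UpperRegular y.1)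
    (hi : idx W y.1 < i) : (mat W.cplx (PhiSimp W) ^ n) z y = 0 := by
  induction i generalizing n y with
  | zero => omega
  | succ i ih =>
    obtain ⟨m, rfl⟩ : ∃ m, n = m + 1 := ⟨n - 1, by omega⟩
    rw [pow_succ, Matrix.mul_apply]
    refine Finset.sum_eq_zero fun x _ => ?_
    by_cases hne : mat W.cplx (PhiSimp W) x y = 0
    · rw [hne, mul_zero]
    · obtain ⟨hx, hlt⟩ := Phi_upper hy hne
      rw [ih m (by omega) x hx (by omega), zero_mul]

theorem crit_stab (hΛ : IsRefMap W Λ) (hV : IsCorefMap W Vee) (n : ℕ) (hn : W.k + 1 ≤ n)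
    (z y : W.cplx) (hy : W.Critical y.1) :
    (mat W.cplx (PhiSimp W) ^ n) z y = ((mat W.cplx Vee)ᵀ * mat W.cplx Λ) z y := by
  have hB : ∀ m, mat W.cplx (PhiSimp W) ^ m * (mat W.cplx Vee)ᵀ = (mat W.cplx Vee)ᵀ := by
    intro m
    induction m with
    | zero => simp
    | succ m ih => rw [pow_succ, mul_assoc, coref_Phi hV, ih]
  have e1 : ((mat W.cplx Vee)ᵀ * mat W.cplx Λ) z y = (mat W.cplx Vee)ᵀ z y := by
    rw [Matrix.mul_apply, Finset.sum_eq_single y]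
    · rw [mat_apply, hΛ.2.1 _ hy]; simp
    · intro x _ hx
      rw [mat_apply _ Λ, hΛ.2.1 _ hy, if_neg, mul_zero]
      rw [Finset.mem_singleton]
      exact fun h => hx (Subtype.ext h)
    · simp
  rw [e1, ← hB n, Matrix.mul_apply, Finset.sum_eq_single y]
  · rw [Matrix.transpose_apply, mat_apply, hV.2.1 _ hy]; simp
  · intro x _ hx
    rw [Matrix.transpose_apply]
    rcases cases3 W x.2 with h | h | h
    · rw [mat_apply, hV.2.1 _ h, if_neg, mul_zero]
      rw [Finset.mem_singleton]
      exact fun h => hx (Subtype.ext h.symm)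
    · rw [mat_apply, (hV.2.2 _ h).1]; simp
    · rw [upper_nil (W.k + 1) n hn z x h, zero_mul]
      exact Nat.lt_succ_of_le (idx_spec W le_rfl x.2).2.1
  · simp

theorem stab_aux (hΛ : IsRefMap W Λ) (hV : IsCorefMap W Vee) (i n : ℕ)
    (hn : W.k + 1 + i ≤ n) (z y : W.cplx) (hi : idx W y.1 < i) :
    (mat W.cplx (PhiSimp W) ^ n) z y = ((mat W.cplx Vee)ᵀ * mat W.cplx Λ) z y := by
  induction i generalizing n y with
  | zero => omega
  | succ i ih =>
    rcases cases3 W y.2 with h | h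
    · exact crit_stab hΛ hV n (by omega) z y h
    · obtain ⟨m, rfl⟩ : ∃ m, n = m + 1 := ⟨n - 1, by omega⟩
      have hP : (mat W.cplx Vee)ᵀ * mat W.cplx Λ * mat W.cplx (PhiSimp W)
          = (mat W.cplx Vee)ᵀ * mat W.cplx Λ := by rw [mul_assoc, ref_Phi hΛ]
      rw [pow_succ, ← hP, Matrix.mul_apply, Matrix.mul_apply]
      refine Finset.sum_congr rfl fun x _ => ?_
      by_cases hne : mat W.cplx (PhiSimp W) x y = 0
      · rw [hne, mul_zero, mul_zero]
      · have hlt : idx W x.1 < idx W y.1 := by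
          rcases h with h | h
          · exact Phi_lower h hne
          · exact (Phi_upper h hne).2
        rw [ih m (by omega) x (by omega)]

theorem stab (hΛ : IsRefMap W Λ) (hV : IsCorefMap W Vee) (n : ℕ)
    (hn : W.k + 1 + (W.k + 1) ≤ n) :
    mat W.cplx (PhiSimp W) ^ n = (mat W.cplx Vee)ᵀ * mat W.cplx Λ := by
  ext z y
  exact stab_aux hΛ hV (W.k + 1) n hn z y
    (Nat.lt_succ_of_le (idx_spec W le_rfl y.2).2.1)

theorem frame_sub (h : IsFrame W Λ) : ∀ x ∈ W.cplx, Λ x ⊆ W.cplx :=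
  fun x hx y hy => crit_mem W (h x hx y hy).1

end Main

end FlowProof

/-- For every `p`-chain `c` of `K`, the iterates of the gradient flow
`Φ` on `c` stabilize, and the stable value is `∧̃(∧(c))`; dually, the iterates of the
coflow `Φ*` stabilize at `∨̃(∨(c))`. -/
theorem flow_stabilizes_at_extension_of_reference (W : MorseSeq V)
    (Λ Vee : Finset V → Finset (Finset V))
    (hΛ : IsRefMap W Λ) (hV : IsCorefMap W Vee)
    (p : ℕ) (c : Finset (Finset V)) (hc : IsChainOf W.cplx p c) :
    ((∃ i, (Phi W)^[i + 1] c = (Phi W)^[i] c) ∧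
      ∀ i, (Phi W)^[i + 1] c = (Phi W)^[i] c →
        (Phi W)^[i] c = chainSum (chainSum c Λ) (extMap W Vee)) ∧
    ((∃ j, (PhiStar W)^[j + 1] c = (PhiStar W)^[j] c) ∧
      ∀ j, (PhiStar W)^[j + 1] c = (PhiStar W)^[j] c →
        (PhiStar W)^[j] c = chainSum (chainSum c Vee) (coextMap W Λ)) := by
  have hcK : c ⊆ W.cplx := fun x hx => (hc x hx).1
  have sΛ := FlowProof.frame_sub hΛ.1
  have sV := FlowProof.frame_sub hV.1
  have cΛ : chainSum c Λ ⊆ W.cplx := FlowProof.chainSum_sub fun x hx => sΛ x (hcK hx)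
  have cV : chainSum c Vee ⊆ W.cplx := FlowProof.chainSum_sub fun x hx => sV x (hcK hx)
  have dE : chainSum (chainSum c Λ) (extMap W Vee) ⊆ W.cplx :=
    FlowProof.chainSum_sub fun x _ => Finset.filter_subset _ _
  have dC : chainSum (chainSum c Vee) (coextMap W Λ) ⊆ W.cplx :=
    FlowProof.chainSum_sub fun x _ => Finset.filter_subset _ _
  constructor
  · refine FlowProof.wrapup (PhiSimp W) (FlowProof.Phi_sub W) hcK
      dE _ _
      (FlowProof.stab hΛ hV) ?_ (Phi W) rfl
    rw [FlowProof.vec_chainSum _ cΛ, FlowProof.vec_chainSum _ hcK, Matrix.mulVec_mulVec,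
      FlowProof.mat_ext]
  · refine FlowProof.wrapup (PhiStarSimp W) (FlowProof.PhiStar_sub W) hcK
      dC
      (((FlowProof.mat W.cplx Vee).transpose * FlowProof.mat W.cplx Λ).transpose) (W.k + 1 + (W.k + 1))
      (fun n hn => ?_) ?_ (PhiStar W) rfl
    · rw [FlowProof.mat_PhiStar, ← Matrix.transpose_pow, FlowProof.stab hΛ hV n hn]
    · have e : FlowProof.mat W.cplx (coextMap W Λ) = (FlowProof.mat W.cplx Λ).transpose :=
        FlowProof.mat_ext W Λ
      rw [FlowProof.vec_chainSum _ cV, FlowProof.vec_chainSum _ hcK, Matrix.mulVec_mulVec,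
        e, Matrix.transpose_mul, Matrix.transpose_transpose]
end
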